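/- arXiv:1701.00420 — 2 statements merged into one kernel-verified Lean document; each statement's English description precedes it below -/
import Mathlib

section
/- Let G be a finite group, let M = (D, σ, α) be a connected combinatorial map, and let χ : G → ℂ be a class function written as χ = Σ_{λ ∈ Irr(G)} m_λ·χ_λ with coefficients m_λ ∈ ℂ. Then, as an identity in ℂ, P_χ(M) = |G|^{|E(M)|} · Σ_{λ ∈ Irr(G)} χ_λ(1)^{|F(M)|−|E(M)|} · m_λ^{|V(M)|}, where the exponent |F(M)|−|E(M)| is an integer (possibly negative). -/
open Equiv

/-- The setoid on darts whose classes are the cycles (orbits) of a permutation. -/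
def Equiv.Perm.cycleSetoid {D : Type*} (τ : Equiv.Perm D) : Setoid D :=
  ⟨τ.SameCycle, ⟨fun x => Equiv.Perm.SameCycle.refl τ x, fun h => h.symm, fun h h' => h.trans h'⟩⟩

/-- The number of cycles (orbits) of a permutation. -/
noncomputable def Equiv.Perm.cycleCount {D : Type*} (τ : Equiv.Perm D) : ℕ :=
  Nat.card (Quotient τ.cycleSetoid)

/-- The ordered product of the values of `κ` around the `τ`-orbit of the dart `d`. -/
noncomputable def aroundProd {D G : Type*} [Group G] (τ : Equiv.Perm D) (κ : D → G) (d : D) : G :=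
  ((List.range (Function.minimalPeriod (⇑τ) d)).map fun i => κ ((τ ^ i) d)).prod

/-- A `G`-labelling of a combinatorial map with edge involution `α`. -/
def IsGLabelling {D G : Type*} [Group G] (α : Equiv.Perm D) (κ : D → G) : Prop :=
  ∀ d, κ (α d) = (κ d)⁻¹

/-- A `G`-flow on the combinatorial map `(D, σ, α)`. -/
def IsGFlow {D G : Type*} [Group G] (σ α : Equiv.Perm D) (κ : D → G) : Prop :=
  IsGLabelling α κ ∧ ∀ d, aroundProd σ κ d = 1

/-- A local `G`-tension on the combinatorial map `(D, σ, α)`: the product around every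
face (orbit of `σ ∘ α`) is the identity. -/
def IsLocalTension {D G : Type*} [Group G] (σ α : Equiv.Perm D) (κ : D → G) : Prop :=
  IsGLabelling α κ ∧ ∀ d, aroundProd (σ * α) κ d = 1

/-- A closed walk in the combinatorial map `(D, σ, α)`, as a nonempty list of darts. -/
def IsClosedWalk {D : Type*} (σ α : Equiv.Perm D) (W : List D) : Prop :=
  ∃ h : W ≠ [], W.Chain' (fun a b => σ.SameCycle (α a) b) ∧
    σ.SameCycle (α (W.getLast h)) (W.head h)

/-- A global `G`-tension on the combinatorial map `(D, σ, α)`. -/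
def IsGlobalTension {D G : Type*} [Group G] (σ α : Equiv.Perm D) (κ : D → G) : Prop :=
  IsGLabelling α κ ∧ ∀ W : List D, IsClosedWalk σ α W → (W.map κ).prod = 1

/-- Connectivity of the combinatorial map `(D, σ, α)`: the group generated by `σ` and `α`
acts transitively on the darts. -/
def MapConnected {D : Type*} (σ α : Equiv.Perm D) : Prop :=
  ∀ d d' : D, ∃ g ∈ Subgroup.closure ({σ, α} : Set (Equiv.Perm D)), g d = d'

/-- A covering of combinatorial maps `(D', σ', α') → (D, σ, α)`. -/
def IsMapCovering {D' D : Type*} (σ' α' : Equiv.Perm D') (σ α : Equiv.Perm D)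
    (p : D' → D) : Prop :=
  Function.Surjective p ∧ (∀ d, p (σ' d) = σ (p d)) ∧ (∀ d, p (α' d) = α (p d)) ∧
    ∀ d₁ d₂, σ'.SameCycle d₁ d₂ → p d₁ = p d₂ → d₁ = d₂

/-!
Realise `χ = ∑ i, m i • χ_i` as a weighted trace of the block diagonal representation `⨁ ρ i`.
Expanding the trace at each vertex turns `P_χ(M)` into a sum over states, which attach to every dart
a row index of the block diagonal matrices; each edge then contributes a sum over `G` of a product
of two matrix coefficients. Schur orthogonality makes that sum vanish unless the state agrees
along the two sides of the edge and both its ends lie in the same block. By connectivity the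
surviving states are a choice of an irreducible `ρ i` together with one basis index of `ρ i` for
each face; each of them has weight `m i ^ |V| * (|G| / dim ρ i) ^ |E|`, and there are
`(dim ρ i) ^ |F|` of them.
-/

section MatrixProducts

variable {B K : Type*} [Fintype B] [DecidableEq B] [CommSemiring K]

theorem prod_ofFn_matrix_apply {n : ℕ} (M : Fin (n + 1) → Matrix B B K) (b c : B) :
    (List.ofFn M).prod b c = ∑ a : Fin n → B, ∏ i : Fin (n + 1),
      M i ((Fin.cons b a : Fin (n + 1) → B) i) ((Fin.snoc a c : Fin (n + 1) → B) i) := by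
  induction n generalizing b with
  | zero => simp [Fin.snoc]
  | succ n ih =>
    rw [List.ofFn_succ, List.prod_cons, Matrix.mul_apply,
      ← (Fin.consEquiv fun _ : Fin (n + 1) => B).sum_comp, Fintype.sum_prod_type]
    refine Finset.sum_congr rfl fun e _ => ?_
    rw [ih, Finset.mul_sum]
    refine Finset.sum_congr rfl fun a _ => ?_
    have hcons : (Fin.consEquiv fun _ : Fin (n + 1) => B) (e, a) = Fin.cons e a := rfl
    rw [hcons, ← Fin.cons_snoc_eq_snoc_cons, Fin.prod_univ_succ (n := n + 1)]
    simp only [Fin.cons_succ, Fin.cons_zero]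

-- The index `i + 1` is taken modulo `n`, so the sum is over closed walks.
theorem sum_mul_prod_ofFn_matrix_diag {n : ℕ} [NeZero n] (M : Fin n → Matrix B B K) (w : B → K) :
    ∑ b, w b * (List.ofFn M).prod b b =
      ∑ a : Fin n → B, w (a 0) * ∏ i, M i (a i) (a (i + 1)) := by
  obtain ⟨n, rfl⟩ := Nat.exists_eq_succ_of_ne_zero (NeZero.ne n)
  rw [← (Fin.consEquiv fun _ : Fin (n + 1) => B).sum_comp, Fintype.sum_prod_type]
  refine Finset.sum_congr rfl fun b _ => ?_
  rw [prod_ofFn_matrix_apply, Finset.mul_sum]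
  refine Finset.sum_congr rfl fun a _ => ?_
  have snoc_eq_cons_add_one (i : Fin (n + 1)) :
      (Fin.snoc a b : Fin (n + 1) → B) i = (Fin.cons b a : Fin (n + 1) → B) (i + 1) := by
    refine Fin.lastCases ?_ (fun j => ?_) i <;> simp
  simp only [Fin.consEquiv_apply, Fin.cons_zero, snoc_eq_cons_add_one]

end MatrixProducts

section Cycles

variable {D : Type*}

theorem apply_eq_of_mem_closure {B : Type*} {S : Set (Perm D)} {t : D → B}
    (ht : ∀ τ ∈ S, ∀ d, t (τ d) = t d) {g : Perm D} (hg : g ∈ Subgroup.closure S) (d : D) :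
    t (g d) = t d := by
  induction hg using Subgroup.closure_induction generalizing d with
  | mem τ hτ => exact ht τ hτ d
  | one => rfl
  | mul x y _ _ hx hy => rw [Perm.mul_apply, hx, hy]
  | inv x _ hx => rw [← hx (x⁻¹ d), ← Perm.mul_apply, mul_inv_cancel, Perm.one_apply]

theorem mk_cycleSetoid_apply (τ : Perm D) (d : D) :
    Quotient.mk τ.cycleSetoid (τ d) = Quotient.mk τ.cycleSetoid d :=
  Quotient.sound (Perm.sameCycle_apply_left.2 (Perm.SameCycle.refl τ d))

theorem mk_cycleSetoid_pow_apply (τ : Perm D) (i : ℕ) (d : D) :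
    Quotient.mk τ.cycleSetoid ((τ ^ i) d) = Quotient.mk τ.cycleSetoid d :=
  Quotient.sound (Perm.sameCycle_pow_left.2 (Perm.SameCycle.refl τ d))

theorem sameCycle_out_mk (τ : Perm D) (d : D) :
    τ.SameCycle (Quotient.mk τ.cycleSetoid d).out d :=
  Quotient.eq.1 (Quotient.out_eq (s := τ.cycleSetoid) _)

theorem apply_out_mk_eq {B : Type*} {τ : Perm D} {t : D → B} (ht : ∀ d, t (τ d) = t d)
    (d : D) : t (Quotient.mk τ.cycleSetoid d).out = t d := by
  obtain ⟨i, hi⟩ := sameCycle_out_mk τ d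
  have hmem : τ ^ i ∈ Subgroup.closure {τ} :=
    Subgroup.zpow_mem _ (Subgroup.subset_closure (Set.mem_singleton τ)) i
  have hτ : ∀ τ' ∈ ({τ} : Set (Perm D)), ∀ d, t (τ' d) = t d := by
    rintro _ rfl
    exact ht
  exact (apply_eq_of_mem_closure hτ hmem _).symm.trans (congrArg t hi)

variable [Finite D]

theorem minimalPeriod_perm_pos (τ : Perm D) (d : D) : 0 < Function.minimalPeriod τ d :=
  Function.minimalPeriod_pos_of_mem_periodicPts (τ.injective.mem_periodicPts d)

instance neZero_minimalPeriod_perm (τ : Perm D) (d : D) :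
    NeZero (Function.minimalPeriod τ d) :=
  ⟨(minimalPeriod_perm_pos τ d).ne'⟩

theorem bijective_pow_apply_out (τ : Perm D) :
    Function.Bijective fun p : Σ v : Quotient τ.cycleSetoid,
      Fin (Function.minimalPeriod τ v.out) => (τ ^ (p.2 : ℕ)) p.1.out := by
  constructor
  · rintro ⟨v, i⟩ ⟨w, j⟩ (h : (τ ^ (i : ℕ)) v.out = (τ ^ (j : ℕ)) w.out)
    obtain rfl : v = w := by
      simpa [mk_cycleSetoid_pow_apply] using congrArg (Quotient.mk τ.cycleSetoid) h
    rw [← Perm.iterate_eq_pow, ← Perm.iterate_eq_pow,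
      Function.iterate_eq_iterate_iff_of_lt_minimalPeriod i.2 j.2] at h
    rw [Fin.ext h]
  · intro d
    obtain ⟨i, hi⟩ := (sameCycle_out_mk τ d).exists_nat_pow_eq
    refine ⟨⟨Quotient.mk τ.cycleSetoid d, ⟨_, Nat.mod_lt i (minimalPeriod_perm_pos τ _)⟩⟩,
      Eq.trans ?_ hi⟩
    simp only [← Perm.iterate_eq_pow, Function.iterate_mod_minimalPeriod_eq]

/-- The darts listed cycle by cycle: each cycle of `τ` is numbered by the exponents of `τ`, starting
at its chosen representative. -/
noncomputable def cycleEquiv (τ : Perm D) :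
    (Σ v : Quotient τ.cycleSetoid, Fin (Function.minimalPeriod τ v.out)) ≃ D :=
  Equiv.ofBijective _ (bijective_pow_apply_out τ)

theorem cycleEquiv_apply (τ : Perm D) (v : Quotient τ.cycleSetoid)
    (i : Fin (Function.minimalPeriod τ v.out)) :
    cycleEquiv τ ⟨v, i⟩ = (τ ^ (i : ℕ)) v.out :=
  rfl

theorem cycleEquiv_add_one (τ : Perm D) (v : Quotient τ.cycleSetoid)
    (i : Fin (Function.minimalPeriod τ v.out)) :
    cycleEquiv τ ⟨v, i + 1⟩ = τ (cycleEquiv τ ⟨v, i⟩) := by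
  simp only [cycleEquiv_apply, Fin.val_add, Fin.val_one', Nat.add_mod_mod,
    ← Perm.iterate_eq_pow, Function.iterate_mod_minimalPeriod_eq,
    Function.iterate_succ_apply']

theorem aroundProd_out_eq_prod_ofFn {G : Type*} [Group G] (τ : Perm D) (κ : D → G)
    (v : Quotient τ.cycleSetoid) :
    aroundProd τ κ v.out = (List.ofFn fun i => κ (cycleEquiv τ ⟨v, i⟩)).prod := by
  rw [aroundProd, List.ofFn_eq_map, ← List.map_coe_finRange_eq_range, List.map_map]
  rfl

end Cycles

section FixedPointFreeInvolutions

variable {D : Type*} {α : Perm D}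

theorem exists_eq_out_or_eq_apply_out (hinv : Function.Involutive α) (d : D) :
    ∃ e : Quotient α.cycleSetoid, d = e.out ∨ d = α e.out := by
  have hsq : α ^ (2 : ℤ) = 1 := Perm.ext fun d => hinv d
  obtain ⟨i, hi⟩ := sameCycle_out_mk α d
  refine ⟨Quotient.mk α.cycleSetoid d, ?_⟩
  obtain ⟨j, rfl | rfl⟩ := i.even_or_odd'
  · rw [zpow_mul, hsq, one_zpow] at hi
    exact .inl hi.symm
  · rw [zpow_add, zpow_mul, hsq, one_zpow, one_mul, zpow_one] at hi
    exact .inr hi.symm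

theorem minimalPeriod_eq_two (hinv : Function.Involutive α) (hfpf : ∀ d, α d ≠ d) (d : D) :
    Function.minimalPeriod α d = 2 :=
  have : Fact (Nat.Prime 2) := ⟨Nat.prime_two⟩
  Function.minimalPeriod_eq_prime (hinv d) (hfpf d)

theorem prod_darts_eq_prod_edges {K : Type*} [CommMonoid K] [Fintype D]
    [Fintype (Quotient α.cycleSetoid)] (hinv : Function.Involutive α) (hfpf : ∀ d, α d ≠ d)
    (f : D → K) : ∏ d, f d = ∏ e : Quotient α.cycleSetoid, f e.out * f (α e.out) := by
  rw [← (cycleEquiv α).prod_comp, Fintype.prod_sigma]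
  refine Finset.prod_congr rfl fun e _ => ?_
  simp only [cycleEquiv_apply]
  rw [← Finset.prod_range fun i => f ((α ^ i) e.out), minimalPeriod_eq_two hinv hfpf]
  simp [Finset.prod_range_succ]

variable {G : Type*} [Group G]

theorem bijective_labelling_out (hinv : Function.Involutive α) (hfpf : ∀ d, α d ≠ d) :
    Function.Bijective fun (κ : {κ : D → G // IsGLabelling α κ}) (e : Quotient α.cycleSetoid) =>
      κ.1 e.out := by
  classical
  constructor
  · intro κ κ' h
    ext d
    obtain ⟨e, rfl | rfl⟩ := exists_eq_out_or_eq_apply_out hinv d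
    · exact congrFun h e
    · rw [κ.2, κ'.2]
      exact congrArg _ (congrFun h e)
  · intro x
    let κ (d : D) : G :=
      if d = (Quotient.mk α.cycleSetoid d).out then x (Quotient.mk α.cycleSetoid d)
      else (x (Quotient.mk α.cycleSetoid d))⁻¹
    have hκ : IsGLabelling α κ := by
      intro d
      obtain ⟨e, rfl | rfl⟩ := exists_eq_out_or_eq_apply_out hinv d
      · simp [κ, mk_cycleSetoid_apply, hfpf]
      · simp [κ, mk_cycleSetoid_apply, hfpf, hinv e.out]
    exact ⟨⟨κ, hκ⟩, by ext e; simp [κ]⟩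

theorem sum_labellings_prod_darts {K : Type*} [CommSemiring K] [Fintype D] [Fintype G]
    [Fintype (Quotient α.cycleSetoid)] [Fintype {κ : D → G // IsGLabelling α κ}]
    (hinv : Function.Involutive α) (hfpf : ∀ d, α d ≠ d) (f : D → G → K) :
    ∑ κ : {κ : D → G // IsGLabelling α κ}, ∏ d, f d (κ.1 d) =
      ∏ e : Quotient α.cycleSetoid, ∑ g, f e.out g * f (α e.out) g⁻¹ := by
  classical
  rw [Finset.prod_univ_sum, Fintype.piFinset_univ]
  refine Fintype.sum_bijective _ (bijective_labelling_out hinv hfpf) _ _ fun κ => ?_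
  simp only [prod_darts_eq_prod_edges hinv hfpf, κ.2 _]

end FixedPointFreeInvolutions

section StateSums

variable {D B K G : Type*} [Fintype D] [CommSemiring K] [Group G] {σ α : Perm D}

/-- The partition function `P_χ(M)` of the combinatorial map `M = (D, σ, α)`. -/
noncomputable def partitionFunction (σ α : Perm D) (χ : G → K) : K :=
  ∑ᶠ κ : {κ : D → G // IsGLabelling α κ},
    ∏ᶠ v : Quotient σ.cycleSetoid, χ (aroundProd σ κ.1 v.out)

/-- The contribution of the edge `{d, α d}` to the state `a`, which attaches to the dart `d` the
row index `a d` and the column index `a (σ d)`. -/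
def edgeWeight [Fintype G] (R : G → Matrix B B K) (σ α : Perm D) (a : D → B) (d : D) : K :=
  ∑ g, R g (a d) (a (σ d)) * R g⁻¹ (a (α d)) (a (σ (α d)))

variable [DecidableEq D] [Fintype B] [DecidableEq B]

theorem prod_vertices_eq_sum_states [Fintype (Quotient σ.cycleSetoid)] (R : G →* Matrix B B K)
    (w : B → K) (κ : D → G) :
    ∏ v : Quotient σ.cycleSetoid, ∑ b, w b * R (aroundProd σ κ v.out) b b =
      ∑ a : D → B, (∏ v : Quotient σ.cycleSetoid, w (a v.out)) *
        ∏ d, R (κ d) (a d) (a (σ d)) := by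
  classical
  simp only [aroundProd_out_eq_prod_ofFn, map_list_prod, List.map_ofFn,
    sum_mul_prod_ofFn_matrix_diag]
  rw [Finset.prod_univ_sum, Fintype.piFinset_univ,
    ← ((arrowCongr (cycleEquiv σ) (Equiv.refl B)).symm.trans (piCurry fun v _ => B)).sum_comp]
  refine Finset.sum_congr rfl fun a _ => ?_
  rw [Finset.prod_mul_distrib, ← (cycleEquiv σ).prod_comp, Fintype.prod_sigma]
  simp only [← cycleEquiv_add_one]
  rfl

theorem partitionFunction_eq_sum_states [Fintype G] [Fintype (Quotient σ.cycleSetoid)]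
    [Fintype (Quotient α.cycleSetoid)] (hinv : Function.Involutive α) (hfpf : ∀ d, α d ≠ d)
    (R : G →* Matrix B B K) (w : B → K) :
    partitionFunction σ α (fun g => ∑ b, w b * R g b b) =
      ∑ a : D → B, (∏ v : Quotient σ.cycleSetoid, w (a v.out)) *
        ∏ e : Quotient α.cycleSetoid, edgeWeight R σ α a e.out := by
  have : Fintype {κ : D → G // IsGLabelling α κ} := Fintype.ofFinite _
  simp only [partitionFunction, finsum_eq_sum_of_fintype, finprod_eq_prod_of_fintype,
    prod_vertices_eq_sum_states]
  rw [Finset.sum_comm]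
  refine Finset.sum_congr rfl fun a _ => ?_
  rw [← Finset.mul_sum,
    sum_labellings_prod_darts hinv hfpf fun d g => R g (a d) (a (σ d))]
  rfl

end StateSums

section FaceStates

variable {D ι : Type*} {n : ι → Type*} {σ α : Perm D}

/-- The state that attaches to each dart the block `p.1` and, in this block, the index that `p.2`
gives to the face containing the dart. -/
def faceState (σ α : Perm D) (p : Σ i, Quotient (σ * α).cycleSetoid → n i) (d : D) : Σ i, n i :=
  ⟨p.1, p.2 (Quotient.mk _ d)⟩

theorem faceState_apply_face (p : Σ i, Quotient (σ * α).cycleSetoid → n i) (d : D) :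
    faceState σ α p (σ (α d)) = faceState σ α p d := by
  rw [faceState, ← Perm.mul_apply, mk_cycleSetoid_apply, faceState]

theorem faceState_injective [Nonempty D] :
    Function.Injective (faceState σ α : (Σ i, Quotient (σ * α).cycleSetoid → n i) → _) := by
  rintro ⟨i, c⟩ ⟨j, c'⟩ h
  obtain ⟨d₀⟩ := ‹Nonempty D›
  obtain rfl : i = j := congrArg Sigma.fst (congrFun h d₀)
  congr 1
  funext f
  obtain ⟨d, rfl⟩ := Quotient.exists_rep f
  exact eq_of_heq (Sigma.mk.inj (congrFun h d)).2

theorem mem_range_faceState [Nonempty D] (hconn : MapConnected σ α) {a : D → Σ i, n i}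
    (hface : ∀ d, a (σ (α d)) = a d) (hblock : ∀ d, (a (σ d)).1 = (a d).1) :
    a ∈ Set.range (faceState σ α) := by
  obtain ⟨d₀⟩ := ‹Nonempty D›
  have hgen : ∀ τ ∈ ({σ, α} : Set (Perm D)), ∀ d, (a (τ d)).1 = (a d).1 := by
    rintro τ (rfl | rfl) d
    · exact hblock d
    · rw [← hblock, hface]
  have hconst (d : D) : ∃ x : n (a d₀).1, a d = ⟨(a d₀).1, x⟩ := by
    obtain ⟨g, hg, rfl⟩ := hconn d₀ d
    have hblock : (a (g d₀)).1 = (a d₀).1 :=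
      apply_eq_of_mem_closure (t := fun d => (a d).1) hgen hg d₀
    exact hblock ▸ ⟨(a (g d₀)).2, rfl⟩
  choose x hx using hconst
  refine ⟨⟨(a d₀).1, fun f => x f.out⟩, funext fun d => ?_⟩
  rw [faceState, ← hx]
  exact apply_out_mk_eq (τ := σ * α) hface d

end FaceStates

section SchurOrthogonalMatrices

variable {D G K ι : Type*} {n : ι → Type*} [Group G] [Fintype G] [CommSemiring K] [DecidableEq ι]
  [∀ i, DecidableEq (n i)] {R : G → Matrix (Σ i, n i) (Σ i, n i) K} {s : ι → K} {σ α : Perm D}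

/-- The Schur orthogonality relations for a family of block diagonal matrices indexed by `G`; the
constant of the block `i` is `s i`, which is `|G| / dim ρ i` for irreducible representations. -/
def IsSchurOrthogonal (R : G → Matrix (Σ i, n i) (Σ i, n i) K) (s : ι → K) : Prop :=
  ∀ a b c d, ∑ g, R g a b * R g⁻¹ c d = if a = d ∧ b = c ∧ a.1 = b.1 then s a.1 else 0

theorem IsSchurOrthogonal.edgeWeight_faceState (hR : IsSchurOrthogonal R s)
    (hinv : Function.Involutive α) (p : Σ i, Quotient (σ * α).cycleSetoid → n i) (d : D) :
    edgeWeight R σ α (faceState σ α p) d = s p.1 := by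
  have hσ : faceState σ α p (σ d) = faceState σ α p (α d) := by
    rw [← faceState_apply_face p (α d), hinv]
  exact (hR _ _ _ _).trans (if_pos ⟨(faceState_apply_face p d).symm, hσ, rfl⟩)

theorem IsSchurOrthogonal.mem_range_faceState_of_prod_ne_zero
    [Fintype (Quotient α.cycleSetoid)] [Nonempty D] (hR : IsSchurOrthogonal R s)
    (hinv : Function.Involutive α) (hconn : MapConnected σ α) {a : D → Σ i, n i}
    (ha : ∏ e : Quotient α.cycleSetoid, edgeWeight R σ α a e.out ≠ 0) :
    a ∈ Set.range (faceState σ α) := by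
  have hedge (e : Quotient α.cycleSetoid) : a e.out = a (σ (α e.out)) ∧
      a (σ e.out) = a (α e.out) ∧ (a e.out).1 = (a (σ e.out)).1 := by
    by_contra hne
    exact ha (Finset.prod_eq_zero (Finset.mem_univ e) ((hR _ _ _ _).trans (if_neg hne)))
  refine mem_range_faceState hconn (fun d => ?_) fun d => ?_ <;>
    obtain ⟨e, rfl | rfl⟩ := exists_eq_out_or_eq_apply_out hinv d <;>
    obtain ⟨hface, hface', hblock⟩ := hedge e
  · exact hface.symm
  · rw [hinv, hface']
  · exact hblock.symm
  · rw [← hface, ← hface', hblock]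

theorem IsSchurOrthogonal.partitionFunction_eq [Finite D] [Nonempty D] [Fintype ι]
    [∀ i, Fintype (n i)] {R : G →* Matrix (Σ i, n i) (Σ i, n i) K} (hR : IsSchurOrthogonal R s)
    (hinv : Function.Involutive α) (hfpf : ∀ d, α d ≠ d) (hconn : MapConnected σ α) (w : ι → K) :
    partitionFunction σ α (fun g => ∑ b, w b.1 * R g b b) =
      ∑ i, (Fintype.card (n i) : K) ^ (σ * α).cycleCount *
        (w i ^ σ.cycleCount * s i ^ α.cycleCount) := by
  classical
  have := Fintype.ofFinite D
  have (τ : Perm D) : Fintype (Quotient τ.cycleSetoid) := Fintype.ofFinite _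
  have weight_faceState (p : Σ i, Quotient (σ * α).cycleSetoid → n i) :
      (∏ v : Quotient σ.cycleSetoid, w (faceState σ α p v.out).1) *
        ∏ e : Quotient α.cycleSetoid, edgeWeight R σ α (faceState σ α p) e.out =
      w p.1 ^ σ.cycleCount * s p.1 ^ α.cycleCount := by
    simp only [hR.edgeWeight_faceState hinv, faceState, Finset.prod_const, Finset.card_univ,
      Perm.cycleCount, Nat.card_eq_fintype_card]
  rw [partitionFunction_eq_sum_states hinv hfpf R fun b => w b.1,
    ← Fintype.sum_of_injective (faceState σ α) faceState_injective _ _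
      (fun a ha => ?_) fun p => (weight_faceState p).symm, Fintype.sum_sigma]
  · simp only [Finset.sum_const, Finset.card_univ, Fintype.card_fun, nsmul_eq_mul, Nat.cast_pow,
      Perm.cycleCount, Nat.card_eq_fintype_card]
  · by_contra hne
    exact ha (hR.mem_range_faceState_of_prod_ne_zero hinv hconn (right_ne_zero_of_mul hne))

end SchurOrthogonalMatrices

section SchurOrthogonality

open Representation

theorem trace_norm_linHom {k G V : Type*} [CommRing k] [Group G] [Fintype G] [AddCommGroup V]
    [Module k V] (ρ : Representation k G V) (X : V →ₗ[k] V) :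
    LinearMap.trace k V ((linHom ρ ρ).norm X) = Nat.card G * LinearMap.trace k V X := by
  have trace_conj (g : G) : LinearMap.trace k V (linHom ρ ρ g X) = LinearMap.trace k V X := by
    rw [linHom_apply, ← Module.End.mul_eq_comp, LinearMap.trace_mul_comm, ← Module.End.mul_eq_comp,
      mul_assoc, ← map_mul, inv_mul_cancel, map_one, mul_one]
  rw [Representation.norm, LinearMap.sum_apply, map_sum]
  simp only [trace_conj, Finset.sum_const, Finset.card_univ, nsmul_eq_mul,
    Nat.card_eq_fintype_card]

theorem toMatrix_norm_linHom_single {k G V W m n : Type*} [CommRing k] [Group G] [Fintype G]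
    [AddCommGroup V] [Module k V] [AddCommGroup W] [Module k W] [Fintype m] [DecidableEq m]
    [Fintype n] [DecidableEq n] (ρ : Representation k G V) (τ : Representation k G W)
    (b : Module.Basis n k V) (c : Module.Basis m k W) (i j : m) (p q : n) :
    LinearMap.toMatrix b c ((linHom ρ τ).norm (Matrix.toLin b c (Matrix.single j p 1))) i q =
      ∑ g, LinearMap.toMatrix c c (τ g) i j * LinearMap.toMatrix b b (ρ g⁻¹) p q := by
  simp only [Representation.norm, LinearMap.sum_apply, map_sum, Matrix.sum_apply, linHom_apply,
    LinearMap.toMatrix_comp b c c, LinearMap.toMatrix_comp b b c, LinearMap.toMatrix_toLin]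
  simp [Matrix.mul_apply, Matrix.single_apply, ite_and]

open CategoryTheory

variable {k : Type*} [Field k] {G : Type*} [Group G]

theorem nontrivial_of_simple (V : FDRep k G) [Simple V] : Nontrivial V := by
  by_contra h
  have := not_nontrivial_iff_subsingleton.1 h
  refine id_nonzero V ?_
  ext x
  exact Subsingleton.elim (α := V) _ _

variable [IsAlgClosed k] {V W : FDRep k G} [Simple V] [Simple W]

theorem eq_zero_of_mem_invariants_linHom (hVW : IsEmpty (V ≅ W)) {f : V →ₗ[k] W}
    (hf : f ∈ (linHom V.ρ W.ρ).invariants) : f = 0 := by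
  have hrank : Module.finrank k (linHom V.ρ W.ρ).invariants = 0 := by
    rw [(linHom.invariantsEquivFDRepHom V W).finrank_eq, FDRep.finrank_hom_simple_simple,
      if_neg (not_nonempty_iff.2 hVW)]
  have := Module.finrank_zero_iff.1 hrank
  exact congrArg Subtype.val (Subsingleton.elim (⟨f, hf⟩ : (linHom V.ρ W.ρ).invariants) 0)

theorem exists_eq_smul_id_of_mem_invariants_linHom {f : V →ₗ[k] V}
    (hf : f ∈ (linHom V.ρ V.ρ).invariants) : ∃ c : k, f = c • LinearMap.id := by
  have hrank : Module.finrank k (linHom V.ρ V.ρ).invariants = 1 := by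
    rw [(linHom.invariantsEquivFDRepHom V V).finrank_eq, FDRep.finrank_hom_simple_simple,
      if_pos ⟨Iso.refl V⟩]
  have hid : LinearMap.id ∈ (linHom V.ρ V.ρ).invariants := fun g => by
    rw [linHom_apply, LinearMap.id_comp, ← Module.End.mul_eq_comp, ← map_mul, mul_inv_cancel,
      map_one, Module.End.one_eq_id]
  have : Nontrivial V := nontrivial_of_simple V
  obtain ⟨c, hc⟩ := (finrank_eq_one_iff_of_nonzero' (⟨_, hid⟩ : (linHom V.ρ V.ρ).invariants)
    fun h => one_ne_zero (α := Module.End k V) (congrArg Subtype.val h)).1 hrank ⟨f, hf⟩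
  exact ⟨c, (congrArg Subtype.val hc).symm⟩

variable {m n : Type*} [Fintype m] [DecidableEq m] [Fintype n] [DecidableEq n]

theorem norm_linHom_eq_zero [Fintype G] (hVW : IsEmpty (V ≅ W)) (X : V →ₗ[k] W) :
    (linHom V.ρ W.ρ).norm X = 0 :=
  eq_zero_of_mem_invariants_linHom hVW fun g => self_norm_apply (linHom V.ρ W.ρ) g X

theorem sum_toMatrix_mul_toMatrix_inv_eq_zero [Fintype G] (hVW : IsEmpty (V ≅ W))
    (b : Module.Basis n k V) (c : Module.Basis m k W) (i j : m) (p q : n) :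
    ∑ g, LinearMap.toMatrix c c (W.ρ g) i j * LinearMap.toMatrix b b (V.ρ g⁻¹) p q = 0 := by
  rw [← toMatrix_norm_linHom_single, norm_linHom_eq_zero hVW, map_zero, Matrix.zero_apply]

theorem exists_norm_linHom_eq_smul_id [Fintype G] (X : V →ₗ[k] V) :
    ∃ c : k, (linHom V.ρ V.ρ).norm X = c • LinearMap.id ∧
      c * Module.finrank k V = Nat.card G * LinearMap.trace k V X := by
  obtain ⟨c, hc⟩ := exists_eq_smul_id_of_mem_invariants_linHom
    fun g => self_norm_apply (linHom V.ρ V.ρ) g X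
  exact ⟨c, hc, by rw [← trace_norm_linHom V.ρ X, hc, map_smul, LinearMap.trace_id, smul_eq_mul]⟩

variable [NeZero (Nat.card G : k)]

theorem finrank_simple_ne_zero [Finite G] (V : FDRep k G) [Simple V] :
    (Module.finrank k V : k) ≠ 0 := by
  have := Fintype.ofFinite G
  have : Nontrivial V := nontrivial_of_simple V
  let b := Module.finBasis k V
  have : Nonempty (Fin (Module.finrank k V)) := b.index_nonempty
  -- Average an endomorphism of trace `1`.
  obtain ⟨A, hA⟩ := Matrix.trace_surjective (n := Fin (Module.finrank k V)) (1 : k)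
  obtain ⟨c, -, hc⟩ := exists_norm_linHom_eq_smul_id (Matrix.toLin b b A)
  rw [Matrix.trace_toLin_eq, hA, mul_one] at hc
  exact right_ne_zero_of_mul (hc ▸ NeZero.ne (Nat.card G : k))

theorem norm_linHom_self_eq_smul_id [Fintype G] (X : V →ₗ[k] V) :
    (linHom V.ρ V.ρ).norm X =
      ((Nat.card G : k) / Module.finrank k V * LinearMap.trace k V X) • LinearMap.id := by
  obtain ⟨c, hX, hc⟩ := exists_norm_linHom_eq_smul_id X
  rw [hX, div_mul_eq_mul_div, ← hc, mul_div_cancel_right₀ _ (finrank_simple_ne_zero V)]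

theorem sum_toMatrix_mul_toMatrix_inv_self [Fintype G] (b : Module.Basis n k V) (i j p q : n) :
    ∑ g, LinearMap.toMatrix b b (V.ρ g) i j * LinearMap.toMatrix b b (V.ρ g⁻¹) p q =
      if i = q ∧ j = p then (Nat.card G : k) / Module.finrank k V else 0 := by
  rw [← toMatrix_norm_linHom_single, norm_linHom_self_eq_smul_id, Matrix.trace_toLin_eq,
    map_smul, LinearMap.toMatrix_id, Matrix.smul_apply, Matrix.one_apply, smul_eq_mul]
  obtain rfl | hjp := eq_or_ne j p
  · simp
  · rw [Matrix.trace_single_eq_of_ne _ _ _ hjp]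
    simp [hjp]

end SchurOrthogonality

section BlockRepresentation

variable {k G ι : Type*} {n : ι → Type*} [Group G] [DecidableEq ι] [∀ i, Fintype (n i)]
  [∀ i, DecidableEq (n i)]

section Representation

variable {V : ι → Type*} [Fintype ι] [CommRing k] [∀ i, AddCommGroup (V i)] [∀ i, Module k (V i)]

/-- The direct sum of the representations `ρ i`, as block diagonal matrices in the bases `b i`. -/
noncomputable def blockRep (ρ : ∀ i, Representation k G (V i))
    (b : ∀ i, Module.Basis (n i) k (V i)) : G →* Matrix (Σ i, n i) (Σ i, n i) k :=
  (Matrix.blockDiagonal'RingHom n k).toMonoidHom.comp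
    (MonoidHom.pi fun i => (LinearMap.toMatrixAlgEquiv (b i)).toMonoidHom.comp (ρ i))

theorem blockRep_apply (ρ : ∀ i, Representation k G (V i)) (b : ∀ i, Module.Basis (n i) k (V i))
    (g : G) : blockRep ρ b g =
      Matrix.blockDiagonal' fun i => LinearMap.toMatrix (b i) (b i) (ρ i g) :=
  rfl

theorem sum_mul_trace_eq_sum_mul_blockRep (ρ : ∀ i, Representation k G (V i))
    (b : ∀ i, Module.Basis (n i) k (V i)) (m : ι → k) (g : G) :
    ∑ i, m i * LinearMap.trace k (V i) (ρ i g) = ∑ x, m x.1 * blockRep ρ b g x x := by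
  simp only [Fintype.sum_sigma, blockRep_apply, Matrix.blockDiagonal'_apply_eq,
    LinearMap.trace_eq_matrix_trace k (b _), Matrix.trace, Matrix.diag_apply, Finset.mul_sum]

end Representation

open CategoryTheory

theorem isSchurOrthogonal_blockRep [Fintype ι] [Fintype G] [Field k] [IsAlgClosed k]
    [NeZero (Nat.card G : k)] {ρ : ι → FDRep k G} [∀ i, Simple (ρ i)]
    (hpairwise : ∀ i j, Nonempty (ρ i ≅ ρ j) → i = j) (b : ∀ i, Module.Basis (n i) k (ρ i)) :
    IsSchurOrthogonal (blockRep (fun i => (ρ i).ρ) b)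
      fun i => (Nat.card G : k) / Module.finrank k (ρ i) := by
  rintro ⟨i, x⟩ ⟨j, y⟩ ⟨i', x'⟩ ⟨j', y'⟩
  simp only [blockRep_apply]
  obtain rfl | hij := eq_or_ne i j
  · obtain rfl | hij' := eq_or_ne i' j'
    · simp only [Matrix.blockDiagonal'_apply_eq]
      obtain rfl | hii' := eq_or_ne i i'
      · simp [sum_toMatrix_mul_toMatrix_inv_self]
      · rw [sum_toMatrix_mul_toMatrix_inv_eq_zero
          (not_nonempty_iff.1 fun h => hii' (hpairwise _ _ h).symm)]
        simp [hii']
    · simp only [Matrix.blockDiagonal'_apply_ne _ _ _ hij', mul_zero, Finset.sum_const_zero]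
      grind
  · simp only [Matrix.blockDiagonal'_apply_ne _ _ _ hij, zero_mul, Finset.sum_const_zero]
    simp [hij]

end BlockRepresentation

open CategoryTheory in
theorem partition_function_formula_general {D G ι k : Type*} [Finite D] [Nonempty D] (σ α : Perm D)
    (hinv : Function.Involutive α) (hfpf : ∀ d, α d ≠ d) (hconn : MapConnected σ α)
    [Group G] [Finite G] [Field k] [IsAlgClosed k] [NeZero (Nat.card G : k)] [Fintype ι]
    (ρ : ι → FDRep k G) (hsimple : ∀ i, Simple (ρ i))
    (hpairwise : ∀ i j, Nonempty (ρ i ≅ ρ j) → i = j) (m : ι → k) (χ : G → k)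
    (hχ : ∀ g, χ g = ∑ i, m i * (ρ i).character g) :
    partitionFunction σ α χ = (Nat.card G : k) ^ α.cycleCount *
      ∑ i, (ρ i).character 1 ^ ((σ * α).cycleCount - α.cycleCount : ℤ) * m i ^ σ.cycleCount := by
  classical
  have := Fintype.ofFinite G
  let b i := Module.finBasis k (ρ i)
  have hR := isSchurOrthogonal_blockRep hpairwise b
  have hχ' : χ = fun g => ∑ x, m x.1 * blockRep (fun i => (ρ i).ρ) b g x x :=
    funext fun g => (hχ g).trans (sum_mul_trace_eq_sum_mul_blockRep _ b m g)
  rw [hχ', hR.partitionFunction_eq hinv hfpf hconn, Finset.mul_sum]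
  refine Finset.sum_congr rfl fun i _ => ?_
  have hdim : (Module.finrank k (ρ i) : k) ≠ 0 := finrank_simple_ne_zero (ρ i)
  rw [Fintype.card_fin, FDRep.char_one, zpow_sub₀ hdim, zpow_natCast, zpow_natCast, div_pow]
  ring

open CategoryTheory in
/-- Formula for the partition function `P_χ(M)` of a connected combinatorial map
`M = (D, σ, α)`, for a class function `χ = ∑ λ, m_λ • χ_λ`. -/
theorem partition_function_formula
    {D : Type} [Fintype D] [Nonempty D] (σ α : Equiv.Perm D)
    (hinv : ∀ d, α (α d) = d) (hfpf : ∀ d, α d ≠ d)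
    (hconn : MapConnected σ α)
    {G : Type} [Group G] [Fintype G]
    (ι : Type) [Fintype ι] (ρ : ι → FDRep ℂ G)
    (hsimple : ∀ i, Simple (ρ i))
    (hpairwise : ∀ i j, Nonempty (ρ i ≅ ρ j) → i = j)
    (hcomplete : ∀ V : FDRep ℂ G, Simple V → ∃ i, Nonempty (V ≅ ρ i))
    (m : ι → ℂ) (χ : G → ℂ)
    (hclass : ∀ g h : G, χ (h * g * h⁻¹) = χ g)
    (hχ : ∀ g, χ g = ∑ i, m i * (ρ i).character g) :
    (∑ᶠ κ : {κ : D → G // IsGLabelling α κ},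
        ∏ᶠ v : Quotient σ.cycleSetoid, χ (aroundProd σ κ.1 v.out))
      = (Nat.card G : ℂ) ^ α.cycleCount *
        ∑ i, ((ρ i).character 1) ^ (((σ * α).cycleCount : ℤ) - (α.cycleCount : ℤ)) *
          (m i) ^ σ.cycleCount :=
  partition_function_formula_general σ α hinv hfpf hconn ρ hsimple hpairwise m χ hχ
end

section
/- Let G be a finite group, C a conjugacy class of G, and g ≥ 0 an integer. Define A_g(G, C) := |{(x_1, …, x_g, y_1, …, y_g, z) ∈ G^{2g} × C : [x_1,y_1]·[x_2,y_2]⋯[x_g,y_g] = z⁻¹}|, where [x,y] = x·y·x⁻¹·y⁻¹. Then, as an identity in ℂ, A_g(G, C) = |G|^{2g−1} · |C| · Σ_{λ ∈ Irr(G)} χ_λ(C) / χ_λ(1)^{2g−1}, where χ_λ(C) denotes the common value of χ_λ on the elements of C, and the exponent 2g−1 is an integer (equal to −1 when g = 0). -/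
/-!
For an irreducible representation `V` with character `χ`, Schur's lemma makes
`∑ x, ρ (x * y * x⁻¹)` the scalar `|G| χ(y) / χ(1)`. Multiplying by `ρ y⁻¹` and summing over `y`,
the orthogonality of characters turns the sum of `ρ ⁅x, y⁆` over all pairs into the scalar
`(|G| / χ(1)) ^ 2`, so that the sum of `ρ` over all products of `g` commutators is
`(|G| / χ(1)) ^ (2 * g)`. The solutions are then counted through the character of the regular
representation, `∑ i, χᵢ(1) χᵢ(w) = |G|` if `w = 1` and `0` otherwise. That identity holds because
a class function orthogonal to every irreducible character acts as `0` on every irreducible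
representation, hence is `0` in the semisimple ring `k[G]`.
-/

open CategoryTheory
open scoped commutatorElement MonoidAlgebra

universe u v w

namespace FrobeniusFormula

section Counting

theorem sum_prod_ofFn {R : Type*} [Semiring R] {α : Type*} [Fintype α] (f : α → R) (n : ℕ) :
    ∑ p : Fin n → α, (List.ofFn fun i => f (p i)).prod = (∑ a, f a) ^ n := by
  induction n with
  | zero => simp
  | succ n ih =>
    rw [← (Fin.consEquiv fun _ => α).sum_comp, Fintype.sum_prod_type]
    simp only [Fin.consEquiv_apply, List.ofFn_succ, Fin.cons_zero, Fin.cons_succ, List.prod_cons,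
      ← Finset.mul_sum, ih, ← Finset.sum_mul, pow_succ']

theorem card_subtype_prod_prod {α β γ : Type*} [Finite α] [Finite β] [Fintype γ]
    (p : α × β × γ → Prop) :
    Nat.card {t // p t} = ∑ c, Nat.card {s : α × β // p (s.1, s.2, c)} := by
  rw [← Nat.card_sigma]
  exact Nat.card_congr
    { toFun t := ⟨t.1.2.2, (t.1.1, t.1.2.1), t.2⟩
      invFun s := ⟨(s.2.1.1, s.2.1.2, s.1), s.2.2⟩ }

end Counting

section Character

variable {k : Type u} [Field k] {G : Type v} [Group G]

theorem character_eq_of_isConj (V : FDRep k G) {a b : G} (h : IsConj a b) :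
    V.character a = V.character b := by
  obtain ⟨c, rfl⟩ := isConj_iff.1 h
  exact (V.char_conj a c).symm

theorem character_out_eq (V : FDRep k G) {C : ConjClasses G} {z : G} (hz : z ∈ C.carrier) :
    V.character (Quotient.out C) = V.character z := by
  refine character_eq_of_isConj V (ConjClasses.mk_eq_mk_iff_isConj.1 ?_)
  rw [ConjClasses.mem_carrier_iff_mk_eq.1 hz]
  exact Quotient.out_eq C

/-- A class function on a group. Constancy on conjugacy classes is encoded as invariance under
every inner automorphism. -/
def IsClassFunction {α : Type*} (f : G → α) : Prop :=
  ∀ g h, f (h * g * h⁻¹) = f g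

theorem isClassFunction_character (V : FDRep k G) : IsClassFunction V.character :=
  V.char_conj

theorem IsClassFunction.comp_inv {α : Type*} {f : G → α} (hf : IsClassFunction f) :
    IsClassFunction fun g => f g⁻¹ := fun g h => by
  simpa [mul_assoc] using hf g⁻¹ h

theorem commute_sum_smul_ρ [Fintype G] (V : FDRep k G) {f : G → k} (hf : IsClassFunction f)
    (h : G) : Commute (∑ g, f g • V.ρ g) (V.ρ h) := by
  rw [Commute, SemiconjBy, Finset.sum_mul, Finset.mul_sum]
  refine Fintype.sum_equiv (MulAut.conj h⁻¹).toEquiv _ _ fun g => ?_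
  have hfg : f (h⁻¹ * g * h) = f g := by simpa using hf g h⁻¹
  simp [← mul_assoc, hfg, ← map_mul]

theorem commute_sum_conj_ρ [Fintype G] (V : FDRep k G) (A : Module.End k V) (h : G) :
    Commute (∑ x, V.ρ x * A * V.ρ x⁻¹) (V.ρ h) := by
  rw [Commute, SemiconjBy, Finset.sum_mul, Finset.mul_sum]
  refine Fintype.sum_equiv (Equiv.mulLeft h⁻¹) _ _ fun x => ?_
  simp only [Equiv.coe_mulLeft, mul_inv_rev, inv_inv, map_mul, mul_assoc]
  rw [← mul_assoc (V.ρ h), ← map_mul V.ρ h h⁻¹, mul_inv_cancel, map_one, one_mul]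

end Character

section Schur

variable {k : Type u} [Field k] [IsAlgClosed k]

theorem exists_eq_smul_one_of_commute {G : Type v} [Monoid G] (V : FDRep k G) [Simple V]
    {T : Module.End k V} (hT : ∀ g, Commute T (V.ρ g)) : ∃ c : k, T = c • 1 := by
  let f : V ⟶ V := ⟨InducedCategory.homMk (ModuleCat.ofHom T), fun g =>
    InducedCategory.hom_ext (ModuleCat.hom_ext (hT g))⟩
  obtain ⟨c, hc⟩ := endomorphism_simple_eq_smul_id k f
  exact ⟨c, (congrArg (fun φ : V ⟶ V => φ.hom.hom.hom) hc).symm⟩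

variable {G : Type v} [Group G] [NeZero (Nat.card G : k)]

theorem sum_character_mul_character_inv [Fintype G] (V : FDRep k G) [Simple V] :
    ∑ g, V.character g * V.character g⁻¹ = Nat.card G := by
  have := invertibleOfNonzero (NeZero.ne (Nat.card G : k))
  have h := FDRep.char_orthonormal V V
  rw [if_pos ⟨Iso.refl V⟩, inv_mul_eq_one₀ (NeZero.ne _)] at h
  exact h.symm

/- The central element `∑ g, χ(g⁻¹) g` acts by some scalar `c`, and taking traces gives
`c * χ(1) = |G| ≠ 0`. -/
theorem character_one_ne_zero [Finite G] (V : FDRep k G) [Simple V] : V.character 1 ≠ 0 := by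
  cases nonempty_fintype G
  obtain ⟨c, hc⟩ := exists_eq_smul_one_of_commute V
    (commute_sum_smul_ρ V (isClassFunction_character V).comp_inv)
  have htrace : (Nat.card G : k) = c * V.character 1 := by
    rw [← sum_character_mul_character_inv V]
    simpa [FDRep.character, mul_comm] using congrArg (LinearMap.trace k V) hc
  exact right_ne_zero_of_mul (htrace ▸ NeZero.ne (Nat.card G : k))

theorem eq_trace_div_smul_one_of_commute [Finite G] (V : FDRep k G) [Simple V]
    {T : Module.End k V} (hT : ∀ g, Commute T (V.ρ g)) :
    T = (LinearMap.trace k V T / V.character 1) • (1 : Module.End k V) := by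
  obtain ⟨c, rfl⟩ := exists_eq_smul_one_of_commute V hT
  rw [map_smul, LinearMap.trace_one, ← V.char_one, smul_eq_mul,
    mul_div_cancel_right₀ c (character_one_ne_zero V)]

variable [Fintype G]

theorem sum_smul_ρ (V : FDRep k G) [Simple V] {f : G → k} (hf : IsClassFunction f) :
    ∑ g, f g • V.ρ g = ((∑ g, f g * V.character g) / V.character 1) • (1 : Module.End k V) := by
  rw [eq_trace_div_smul_one_of_commute V (commute_sum_smul_ρ V hf)]
  simp [FDRep.character]

theorem sum_conj_ρ (V : FDRep k G) [Simple V] (A : Module.End k V) :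
    ∑ x, V.ρ x * A * V.ρ x⁻¹ =
      (Nat.card G * LinearMap.trace k V A / V.character 1) • (1 : Module.End k V) := by
  have htrace (x : G) : LinearMap.trace k V (V.ρ x * A * V.ρ x⁻¹) = LinearMap.trace k V A := by
    rw [LinearMap.trace_mul_comm, ← mul_assoc, ← map_mul, inv_mul_cancel, map_one, one_mul]
  rw [eq_trace_div_smul_one_of_commute V (commute_sum_conj_ρ V A)]
  simp [htrace]

end Schur

section Commutators

/-- The product `⁅x₁, y₁⁆ * ⋯ * ⁅x_g, y_g⁆` of the commutators of two `g`-tuples, whose fibres are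
counted by the Frobenius formula. -/
def prodCommutators {G : Type*} [Group G] {g : ℕ} (x y : Fin g → G) : G :=
  (List.ofFn fun i => ⁅x i, y i⁆).prod

variable {k : Type u} [Field k] [IsAlgClosed k] {G : Type v} [Group G] [Fintype G]
  [NeZero (Nat.card G : k)] (V : FDRep k G) [Simple V]

theorem sum_ρ_commutator_left (y : G) :
    ∑ x : G, V.ρ ⁅x, y⁆ = (Nat.card G / V.character 1 * V.character y) • V.ρ y⁻¹ := by
  simp only [commutatorElement_def, map_mul]
  rw [← Finset.sum_mul, sum_conj_ρ, smul_one_mul, mul_div_right_comm]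
  rfl

theorem sum_ρ_commutator :
    ∑ p : G × G, V.ρ ⁅p.1, p.2⁆ = (Nat.card G / V.character 1) ^ 2 • (1 : Module.End k V) := by
  calc ∑ p : G × G, V.ρ ⁅p.1, p.2⁆
    _ = (Nat.card G / V.character 1) • ∑ y, V.character y • V.ρ y⁻¹ := by
      simp only [Fintype.sum_prod_type_right, sum_ρ_commutator_left, mul_smul, Finset.smul_sum]
    _ = (Nat.card G / V.character 1) • ∑ y, V.character y⁻¹ • V.ρ y := by
      rw [← Equiv.sum_comp (Equiv.inv G)]
      simp
    _ = (Nat.card G / V.character 1) ^ 2 • (1 : Module.End k V) := by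
      rw [sum_smul_ρ V (isClassFunction_character V).comp_inv]
      simp only [mul_comm (V.character _⁻¹), sum_character_mul_character_inv, smul_smul, sq]

theorem sum_ρ_prodCommutators (g : ℕ) :
    ∑ p : (Fin g → G) × (Fin g → G), V.ρ (prodCommutators p.1 p.2) =
      (Nat.card G / V.character 1) ^ (2 * g) • (1 : Module.End k V) := by
  rw [← (Equiv.arrowProdEquivProdArrow (Fin g) (fun _ => G) (fun _ => G)).sum_comp, pow_mul,
    ← one_pow (M := Module.End k V) g, ← smul_pow, ← sum_ρ_commutator, ← sum_prod_ofFn]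
  simp [prodCommutators, map_list_prod, List.map_ofFn, Function.comp_def]

theorem sum_character_prodCommutators_mul (g : ℕ) (w : G) :
    ∑ p : (Fin g → G) × (Fin g → G), V.character (prodCommutators p.1 p.2 * w) =
      (Nat.card G / V.character 1) ^ (2 * g) * V.character w := by
  simp only [FDRep.character, map_mul]
  rw [← map_sum, ← Finset.sum_mul, sum_ρ_prodCommutators, smul_one_mul, map_smul]
  rfl

end Commutators

section Completeness

theorem eq_zero_of_forall_isSimpleModule_quotient_smul_eq_zero {R : Type*} [Ring R]
    [IsSemisimpleRing R] {r : R}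
    (hr : ∀ I : Ideal R, IsSimpleModule R (R ⧸ I) → ∀ m : R ⧸ I, r • m = 0) : r = 0 := by
  rw [← Submodule.mem_bot R, ← IsSemisimpleRing.jacobson_eq_bot R]
  refine Submodule.mem_sInf.2 fun I hI => ?_
  have h := hr I (isSimpleModule_iff_isCoatom.2 hI) (Submodule.Quotient.mk 1)
  simpa [← Submodule.Quotient.mk_smul, Submodule.Quotient.mk_eq_zero] using h

theorem asAlgebraHom_ofModule'_apply {k G M : Type*} [CommSemiring k] [Monoid G] [AddCommMonoid M]
    [Module k M] [Module k[G] M] [IsScalarTower k k[G] M] (a : k[G]) (m : M) :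
    (Representation.ofModule' M : Representation k G M).asAlgebraHom a m = a • m := by
  simp [Representation.asAlgebraHom_def, Representation.ofModule']

theorem isIrreducible_ofModule' {k G M : Type*} [Field k] [Monoid G] [AddCommGroup M] [Module k M]
    [Module k[G] M] [IsScalarTower k k[G] M] [IsSimpleModule k[G] M] :
    (Representation.ofModule' M : Representation k G M).IsIrreducible := by
  let σ : Representation k G M := Representation.ofModule' M
  let e : σ.asModule ≃ₗ[k[G]] M :=
    { σ.asModuleEquiv with
      map_smul' a m := (σ.asModuleEquiv_map_smul a m).trans (asAlgebraHom_ofModule'_apply a _) }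
  exact (Representation.irreducible_iff_isSimpleModule_asModule σ).2 (IsSimpleModule.congr e)

variable {k : Type u} [Field k] [IsAlgClosed k] {G : Type u} [Group G]

theorem simple_of_isIrreducible [Finite G] [NeZero (Nat.card G : k)] {M : Type u}
    [AddCommGroup M] [Module k M] [Module.Finite k M] (σ : Representation k G M)
    [σ.IsIrreducible] : Simple (FDRep.of σ) := by
  rw [FDRep.simple_iff_end_is_rank_one,
    ← (Representation.linHom.invariantsEquivFDRepHom (FDRep.of σ) (FDRep.of σ)).finrank_eq]
  exact (Representation.invariantsEquivIntertwiningMap σ σ).finrank_eq.trans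
    (Representation.IsIrreducible.finrank_intertwiningMap_self σ)

theorem eq_zero_of_forall_simple_asAlgebraHom_eq_zero [Finite G] [NeZero (Nat.card G : k)]
    {a : k[G]} (ha : ∀ V : FDRep k G, Simple V → Representation.asAlgebraHom V.ρ a = 0) :
    a = 0 := by
  refine eq_zero_of_forall_isSimpleModule_quotient_smul_eq_zero fun I _ m => ?_
  let σ : Representation k G (k[G] ⧸ I) := Representation.ofModule' (k[G] ⧸ I)
  have : σ.IsIrreducible := isIrreducible_ofModule'
  have : Module.Finite k (k[G] ⧸ I) := Module.Finite.trans k[G] _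
  have hσ : σ.asAlgebraHom a = 0 := ha (FDRep.of σ) (simple_of_isIrreducible σ)
  rw [← asAlgebraHom_ofModule'_apply (k := k), hσ, LinearMap.zero_apply]

variable [Fintype G] [NeZero (Nat.card G : k)]

theorem eq_zero_of_forall_simple_sum_smul_ρ_eq_zero {f : G → k}
    (hf : ∀ V : FDRep k G, Simple V → ∑ g, f g • V.ρ g = 0) : f = 0 := by
  have hsum : ∑ g, MonoidAlgebra.single g (f g) = 0 :=
    eq_zero_of_forall_simple_asAlgebraHom_eq_zero fun V hV => by
      simpa [Representation.asAlgebraHom_single] using hf V hV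
  classical
  ext g
  simpa [Finsupp.finsetSum_apply, Finsupp.single_apply] using
    congrArg (fun a : k[G] => a.coeff g) hsum

theorem IsClassFunction.eq_zero_of_forall_simple {f : G → k} (hf : IsClassFunction f)
    (horth : ∀ V : FDRep k G, Simple V → ∑ g, f g * V.character g⁻¹ = 0) : f = 0 := by
  have hinv : (fun g => f g⁻¹) = 0 := eq_zero_of_forall_simple_sum_smul_ρ_eq_zero fun V hV => by
    have h : ∑ g, f g⁻¹ * V.character g = 0 := by
      rw [← Equiv.sum_comp (Equiv.inv G)]
      simpa using horth V hV
    rw [sum_smul_ρ V hf.comp_inv, h, zero_div, zero_smul]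
  funext g
  simpa using congrFun hinv g⁻¹

end Completeness

section IrreducibleCharacters

/-- `ρ` lists each simple finite-dimensional representation of `G` over `k` exactly once up to
isomorphism, so that the index type `ι` plays the role of `Irr(G)`. -/
structure IsIrrepSystem {k : Type u} [Field k] {G : Type v} [Group G] {ι : Type w}
    (ρ : ι → FDRep k G) : Prop where
  simple : ∀ i, Simple (ρ i)
  eq_of_iso : ∀ i j, Nonempty (ρ i ≅ ρ j) → i = j
  exists_iso : ∀ V : FDRep k G, Simple V → ∃ i, Nonempty (V ≅ ρ i)

variable {k : Type u} [Field k] [IsAlgClosed k] {ι : Type w}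

theorem IsIrrepSystem.sum_character_mul_character_inv {G : Type v} [Group G] [Fintype G]
    [NeZero (Nat.card G : k)] [DecidableEq ι] {ρ : ι → FDRep k G} (hρ : IsIrrepSystem ρ)
    (i j : ι) :
    ∑ g, (ρ i).character g * (ρ j).character g⁻¹ = if i = j then (Nat.card G : k) else 0 := by
  have := invertibleOfNonzero (NeZero.ne (Nat.card G : k))
  have := hρ.simple i
  have := hρ.simple j
  have hiso : Nonempty (ρ i ≅ ρ j) ↔ i = j :=
    ⟨hρ.eq_of_iso i j, fun h => h ▸ ⟨Iso.refl (ρ i)⟩⟩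
  have h := FDRep.char_orthonormal (ρ i) (ρ j)
  rw [inv_mul_eq_iff_eq_mul₀ (NeZero.ne _)] at h
  simpa [hiso] using h

variable {G : Type u} [Group G] [NeZero (Nat.card G : k)] [Fintype ι] {ρ : ι → FDRep k G}

theorem IsClassFunction.card_mul_eq_sum_character [Fintype G] {f : G → k}
    (hf : IsClassFunction f) (hρ : IsIrrepSystem ρ) (w : G) :
    Nat.card G * f w = ∑ i, (∑ g, f g * (ρ i).character g⁻¹) * (ρ i).character w := by
  classical
  let a (i : ι) : k := ∑ g, f g * (ρ i).character g⁻¹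
  let F (w : G) : k := Nat.card G * f w - ∑ i, a i * (ρ i).character w
  have hF : IsClassFunction F := fun g h => by
    simp only [F, hf g h, FDRep.char_conj]
  have horth (j : ι) : ∑ g, F g * (ρ j).character g⁻¹ = 0 :=
    calc ∑ g, F g * (ρ j).character g⁻¹
      _ = Nat.card G * a j -
            ∑ i, a i * ∑ g, (ρ i).character g * (ρ j).character g⁻¹ := by
        simp only [F, a, sub_mul, Finset.sum_sub_distrib, Finset.sum_mul, Finset.mul_sum,
          mul_assoc]
        rw [Finset.sum_comm]
      _ = 0 := by simp [hρ.sum_character_mul_character_inv, mul_comm]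
  have hF_zero : F = 0 := hF.eq_zero_of_forall_simple fun V hV => by
    obtain ⟨j, ⟨e⟩⟩ := hρ.exists_iso V hV
    rw [FDRep.char_iso e, horth j]
  exact sub_eq_zero.1 (congrFun hF_zero w)

theorem IsIrrepSystem.sum_character_one_mul_character [Finite G] [DecidableEq G]
    (hρ : IsIrrepSystem ρ) (w : G) :
    ∑ i, (ρ i).character 1 * (ρ i).character w = if w = 1 then (Nat.card G : k) else 0 := by
  cases nonempty_fintype G
  have hδ : IsClassFunction fun g : G => if g = 1 then (1 : k) else 0 := fun g h => by
    simp only [conj_eq_one_iff]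
  simpa using (hδ.card_mul_eq_sum_character hρ w).symm

theorem IsIrrepSystem.card_prodCommutators_eq_inv [Finite G] (hρ : IsIrrepSystem ρ) (g : ℕ)
    (w : G) :
    (Nat.card {p : (Fin g → G) × (Fin g → G) // prodCommutators p.1 p.2 = w⁻¹} : k) =
      (Nat.card G : k) ^ (2 * (g : ℤ) - 1) *
        ∑ i, (ρ i).character w / (ρ i).character 1 ^ (2 * (g : ℤ) - 1) := by
  classical
  cases nonempty_fintype G
  have hG : (Nat.card G : k) ≠ 0 := NeZero.ne _
  have hterm (i : ι) :
      (ρ i).character 1 * ((Nat.card G / (ρ i).character 1) ^ (2 * g) * (ρ i).character w) =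
        Nat.card G * ((Nat.card G : k) ^ (2 * (g : ℤ) - 1) *
          ((ρ i).character w / (ρ i).character 1 ^ (2 * (g : ℤ) - 1))) := by
    have := hρ.simple i
    have hd := character_one_ne_zero (ρ i)
    rw [zpow_sub_one₀ hG, zpow_sub_one₀ hd, div_pow]
    simp only [zpow_mul, zpow_ofNat, zpow_natCast, pow_mul]
    field_simp
  refine mul_left_cancel₀ hG ?_
  calc (Nat.card G : k) *
        Nat.card {p : (Fin g → G) × (Fin g → G) // prodCommutators p.1 p.2 = w⁻¹}
    _ = ∑ p : (Fin g → G) × (Fin g → G),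
          if prodCommutators p.1 p.2 * w = 1 then (Nat.card G : k) else 0 := by
      simp [Nat.card_eq_fintype_card, Fintype.card_subtype, mul_eq_one_iff_eq_inv,
        Finset.sum_ite, mul_comm]
    _ = ∑ i, (ρ i).character 1 * ∑ p : (Fin g → G) × (Fin g → G),
          (ρ i).character (prodCommutators p.1 p.2 * w) := by
      simp only [← hρ.sum_character_one_mul_character, Finset.mul_sum]
      exact Finset.sum_comm
    _ = ∑ i, (ρ i).character 1 *
          ((Nat.card G / (ρ i).character 1) ^ (2 * g) * (ρ i).character w) := by
      refine Finset.sum_congr rfl fun i _ => ?_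
      have := hρ.simple i
      rw [sum_character_prodCommutators_mul]
    _ = _ := by simp only [hterm, Finset.mul_sum]

end IrreducibleCharacters

end FrobeniusFormula

open FrobeniusFormula in
theorem frobenius_formula_general {k : Type u} [Field k] [IsAlgClosed k] {G : Type u} [Group G]
    [Finite G] [NeZero (Nat.card G : k)] (C : ConjClasses G) (g : ℕ) {ι : Type w} [Fintype ι]
    {ρ : ι → FDRep k G} (hρ : IsIrrepSystem ρ) :
    (Nat.card {t : (Fin g → G) × (Fin g → G) × C.carrier //
        prodCommutators t.1 t.2.1 = (t.2.2 : G)⁻¹} : k) =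
      (Nat.card G : k) ^ (2 * (g : ℤ) - 1) * (Nat.card C.carrier : k) *
        ∑ i, (ρ i).character (Quotient.out C) / ((ρ i).character 1) ^ (2 * (g : ℤ) - 1) := by
  classical
  cases nonempty_fintype G
  have hfibre (z : C.carrier) :
      (Nat.card {p : (Fin g → G) × (Fin g → G) // prodCommutators p.1 p.2 = (z : G)⁻¹} : k) =
        (Nat.card G : k) ^ (2 * (g : ℤ) - 1) *
          ∑ i, (ρ i).character (Quotient.out C) / (ρ i).character 1 ^ (2 * (g : ℤ) - 1) := by
    simp only [hρ.card_prodCommutators_eq_inv, character_out_eq _ z.2]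
  rw [card_subtype_prod_prod, Nat.cast_sum, Finset.sum_congr rfl fun z _ => hfibre z,
    Finset.sum_const, Finset.card_univ, ← Nat.card_eq_fintype_card, nsmul_eq_mul]
  ring

open CategoryTheory in
/-- The Generalized Frobenius Formula for `k = 1`: counting `2g`-tuples together with an
element `z` of a fixed conjugacy class `C` such that the product of the `g` commutators
equals `z⁻¹`. -/
theorem frobenius_formula
    {G : Type} [Group G] [Fintype G] (C : ConjClasses G) (g : ℕ)
    (ι : Type) [Fintype ι] (ρ : ι → FDRep ℂ G)
    (hsimple : ∀ i, Simple (ρ i))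
    (hpairwise : ∀ i j, Nonempty (ρ i ≅ ρ j) → i = j)
    (hcomplete : ∀ V : FDRep ℂ G, Simple V → ∃ i, Nonempty (V ≅ ρ i)) :
    (Nat.card {t : (Fin g → G) × (Fin g → G) × C.carrier //
        (List.ofFn fun i : Fin g =>
          t.1 i * t.2.1 i * (t.1 i)⁻¹ * (t.2.1 i)⁻¹).prod = (t.2.2 : G)⁻¹} : ℂ)
      = (Nat.card G : ℂ) ^ (2 * (g : ℤ) - 1) * (Nat.card C.carrier : ℂ) *
        ∑ i, (ρ i).character (Quotient.out C) / ((ρ i).character 1) ^ (2 * (g : ℤ) - 1) :=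
  frobenius_formula_general C g ⟨hsimple, hpairwise, hcomplete⟩
end
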